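/- arXiv:1701.04846 — 6 statements merged into one kernel-verified Lean document; each statement's English description precedes it below -/
import Mathlib

section
/- Let n ≥ 1, z ∈ ℝ^n and set z̃ = F_n z with components z̃(0), …, z̃(n−1). Then for every 1 ≤ j ≤ N one has I_{n,λ_j}(z) = (1/(4π))(z̃(2j)² + z̃(2j−1)²); moreover I_{n,λ_0}(z) = (1/(2π)) z̃(0)², and if n is even, I_{n,λ_{n/2}}(z) = (1/(2π)) z̃(n−1)². -/
open MeasureTheory Matrix Filter

/-- The `j`-th Fourier frequency `λ_j = 2πj/n`. -/
noncomputable def fourierFreq (n j : ℕ) : ℝ := 2 * Real.pi * j / n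

/-- The periodogram `I_{n,λ}(z) = (2πn)⁻¹ |∑_{t=1}^n z_t e^{-itλ}|²`. -/
noncomputable def periodogram (n : ℕ) (lam : ℝ) (z : Fin n → ℝ) : ℝ :=
  1 / (2 * Real.pi * n) *
    Complex.normSq (∑ t : Fin n, (z t : ℂ) *
      Complex.exp (-Complex.I * (((t : ℕ) + 1 : ℕ) : ℂ) * (lam : ℂ)))

/-- The real orthogonal Fourier transform matrix `F_n` with rows
`e_0, c_1, s_1, …, c_N, s_N` (and additionally `e_{n/2}` as last row for `n` even). -/
noncomputable def Fmat (n : ℕ) : Matrix (Fin n) (Fin n) ℝ :=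
  Matrix.of fun r t : Fin n =>
    if r.val = 0 then 1 / Real.sqrt n
    else if n % 2 = 0 ∧ r.val = n - 1 then (-1 : ℝ) ^ ((t : ℕ) + 1) / Real.sqrt n
    else if r.val % 2 = 1 then
      Real.sqrt 2 / Real.sqrt n *
        Real.cos (2 * Real.pi * (((r.val + 1) / 2 : ℕ) : ℝ) * (((t : ℕ) + 1 : ℕ) : ℝ) / n)
    else
      -(Real.sqrt 2 / Real.sqrt n) *
        Real.sin (2 * Real.pi * ((r.val / 2 : ℕ) : ℝ) * (((t : ℕ) + 1 : ℕ) : ℝ) / n)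

/-- The diagonal matrix `D_n(f)` with entries `2πf(λ_0), 2πf(λ_1), 2πf(λ_1), …`
matching the row ordering of `F_n`. -/
noncomputable def Dmat (n : ℕ) (f : ℝ → ℝ) : Matrix (Fin n) (Fin n) ℝ :=
  Matrix.diagonal fun r : Fin n => 2 * Real.pi * f (fourierFreq n ((r.val + 1) / 2))

/-- The diagonal correction matrix `C_n(f, f_param)` with entries
`c(λ_0), c(λ_1), c(λ_1), …` where `c = f/f_param`, matching the row ordering of `F_n`. -/
noncomputable def Cmat (n : ℕ) (f fp : ℝ → ℝ) : Matrix (Fin n) (Fin n) ℝ :=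
  Matrix.diagonal fun r : Fin n =>
    f (fourierFreq n ((r.val + 1) / 2)) / fp (fourierFreq n ((r.val + 1) / 2))

/-- Entrywise real power of the diagonal of a matrix: for a diagonal matrix `A` with
positive entries, `diagRPow n A (-(1/2))` is `A^{-1/2}` etc. -/
noncomputable def diagRPow (n : ℕ) (A : Matrix (Fin n) (Fin n) ℝ) (p : ℝ) :
    Matrix (Fin n) (Fin n) ℝ :=
  Matrix.diagonal fun i => A i i ^ p

theorem periodogram_eq (n : ℕ) (lam : ℝ) (z : Fin n → ℝ) :
    periodogram n lam z = 1 / (2 * Real.pi * n) *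
      ((∑ t : Fin n, z t * Real.cos ((((t : ℕ) + 1 : ℕ) : ℝ) * lam)) ^ 2 +
       (∑ t : Fin n, z t * Real.sin ((((t : ℕ) + 1 : ℕ) : ℝ) * lam)) ^ 2) := by
  have h : (∑ t : Fin n, (z t : ℂ) *
      Complex.exp (-Complex.I * (((t : ℕ) + 1 : ℕ) : ℂ) * (lam : ℂ))) =
      ((∑ t : Fin n, z t * Real.cos ((((t : ℕ) + 1 : ℕ) : ℝ) * lam) : ℝ) : ℂ) +
      ((-∑ t : Fin n, z t * Real.sin ((((t : ℕ) + 1 : ℕ) : ℝ) * lam) : ℝ) : ℂ) * Complex.I := by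
    rw [← Finset.sum_neg_distrib]
    simp only [Complex.ofReal_sum]
    rw [Finset.sum_mul, ← Finset.sum_add_distrib]
    refine Finset.sum_congr rfl fun t _ => ?_
    have e : -Complex.I * (((t : ℕ) + 1 : ℕ) : ℂ) * (lam : ℂ) =
        ((-((((t : ℕ) + 1 : ℕ) : ℝ) * lam) : ℝ) : ℂ) * Complex.I := by
      push_cast; ring
    rw [e, Complex.exp_mul_I, ← Complex.ofReal_cos, ← Complex.ofReal_sin, Real.cos_neg,
      Real.sin_neg]
    simp only [Complex.ofReal_mul, Complex.ofReal_neg]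
    ring
  rw [periodogram, h, Complex.normSq_add_mul_I]
  ring

/-- relation between the periodogram and the components of `z̃ = F_n z`. -/
theorem statement0 (n : ℕ) (hn : 1 ≤ n) (z : Fin n → ℝ) :
    (∀ j : ℕ, (_hj1 : 1 ≤ j) → (_hj2 : j ≤ (n - 1) / 2) →
      periodogram n (fourierFreq n j) z =
        1 / (4 * Real.pi) *
          (((Fmat n).mulVec z ⟨2 * j, by omega⟩) ^ 2 +
           ((Fmat n).mulVec z ⟨2 * j - 1, by omega⟩) ^ 2)) ∧
    periodogram n (fourierFreq n 0) z =
      1 / (2 * Real.pi) * ((Fmat n).mulVec z ⟨0, by omega⟩) ^ 2 ∧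
    (n % 2 = 0 →
      periodogram n (fourierFreq n (n / 2)) z =
        1 / (2 * Real.pi) * ((Fmat n).mulVec z ⟨n - 1, by omega⟩) ^ 2) := by
  have hn0 : (n : ℝ) ≠ 0 := by positivity
  have hs : Real.sqrt n ≠ 0 := by positivity
  have hsq : Real.sqrt n ^ 2 = n := Real.sq_sqrt (by positivity)
  have h2 : Real.sqrt 2 ^ 2 = 2 := Real.sq_sqrt (by positivity)
  refine ⟨fun j hj1 hj2 => ?_, ?_, fun he => ?_⟩
  · have a1 : (Fmat n).mulVec z ⟨2 * j, by omega⟩ = -(Real.sqrt 2 / Real.sqrt n) *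
        ∑ t : Fin n, z t * Real.sin ((((t : ℕ) + 1 : ℕ) : ℝ) * fourierFreq n j) := by
      rw [Matrix.mulVec, dotProduct, Finset.mul_sum]
      refine Finset.sum_congr rfl fun t _ => ?_
      rw [Fmat, Matrix.of_apply]
      dsimp only
      rw [if_neg (by omega), if_neg (by omega), if_neg (by omega),
        show 2 * j / 2 = j by omega, fourierFreq,
        show 2 * Real.pi * (j : ℝ) * (((t : ℕ) + 1 : ℕ) : ℝ) / n =
          (((t : ℕ) + 1 : ℕ) : ℝ) * (2 * Real.pi * j / n) by ring]
      ring
    have a2 : (Fmat n).mulVec z ⟨2 * j - 1, by omega⟩ = (Real.sqrt 2 / Real.sqrt n) *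
        ∑ t : Fin n, z t * Real.cos ((((t : ℕ) + 1 : ℕ) : ℝ) * fourierFreq n j) := by
      rw [Matrix.mulVec, dotProduct, Finset.mul_sum]
      refine Finset.sum_congr rfl fun t _ => ?_
      rw [Fmat, Matrix.of_apply]
      dsimp only
      rw [if_neg (by omega), if_neg (by omega), if_pos (by omega),
        show (2 * j - 1 + 1) / 2 = j by omega, fourierFreq,
        show 2 * Real.pi * (j : ℝ) * (((t : ℕ) + 1 : ℕ) : ℝ) / n =
          (((t : ℕ) + 1 : ℕ) : ℝ) * (2 * Real.pi * j / n) by ring]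
      ring
    rw [a1, a2, periodogram_eq, mul_pow, mul_pow, neg_sq, div_pow, h2, hsq]
    generalize (∑ t : Fin n, z t * Real.cos ((((t : ℕ) + 1 : ℕ) : ℝ) * fourierFreq n j)) = A
    generalize (∑ t : Fin n, z t * Real.sin ((((t : ℕ) + 1 : ℕ) : ℝ) * fourierFreq n j)) = B
    field_simp
    ring
  · have a : (Fmat n).mulVec z ⟨0, by omega⟩ = (1 / Real.sqrt n) * ∑ t : Fin n, z t := by
      rw [Matrix.mulVec, dotProduct, Finset.mul_sum]
      refine Finset.sum_congr rfl fun t _ => ?_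
      rw [Fmat, Matrix.of_apply]
      dsimp only
      rw [if_pos rfl]
    rw [a, periodogram_eq, mul_pow, div_pow, hsq]
    simp [fourierFreq]
    ring
  · have a : (Fmat n).mulVec z ⟨n - 1, by omega⟩ =
        (1 / Real.sqrt n) * ∑ t : Fin n, z t * (-1) ^ ((t : ℕ) + 1) := by
      rw [Matrix.mulVec, dotProduct, Finset.mul_sum]
      refine Finset.sum_congr rfl fun t _ => ?_
      rw [Fmat, Matrix.of_apply]
      dsimp only
      rw [if_neg (by omega), if_pos ⟨he, rfl⟩]
      ring
    have f : fourierFreq n (n / 2) = Real.pi := by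
      have : ((n / 2 : ℕ) : ℝ) * 2 = n := by
        exact_mod_cast (by omega : n / 2 * 2 = n)
      rw [fourierFreq, div_eq_iff hn0, ← this]
      ring
    rw [a, periodogram_eq, mul_pow, div_pow, hsq, f]
    simp only [Real.cos_nat_mul_pi, Real.sin_nat_mul_pi, mul_zero, Finset.sum_const_zero]
    field_simp
    ring
end

section
/- Let n ≥ 1, f : [0,2π] → (0,∞), and σ > 0, and set C := σ^{−2} D_n(f) (the nonparametric correction matrix of the i.i.d. N(0,σ²) working model whose spectral density is σ²/(2π)). Then for every z ∈ ℝ^n, det(C)^{−1/2} (2πσ²)^{−n/2} exp(−‖F_n^T C^{−1/2} F_n z‖² / (2σ²)) = (2π)^{−n/2} det(D_n(f))^{−1/2} exp(−(1/2)(F_n z)^T D_n(f)^{−1}(F_n z)). In particular, the nonparametrically corrected likelihood of the i.i.d. N(0,σ²) working model does not depend on σ and equals the Whittle likelihood. -/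
open MeasureTheory Matrix Filter

lemma sum_cos_aux (n : ℕ) (hn : 1 ≤ n) (m : ℤ) (φ : ℝ) :
    ∑ t : Fin n, Real.cos (2 * Real.pi * m * (((t : ℕ) + 1 : ℕ) : ℝ) / n + φ)
      = if (n : ℤ) ∣ m then n * Real.cos φ else 0 := by
  have hn0 : n ≠ 0 := by omega
  have hnC : (n : ℂ) ≠ 0 := by exact_mod_cast hn0
  have hprim := Complex.isPrimitiveRoot_exp n hn0
  set w : ℂ := Complex.exp (2 * Real.pi * Complex.I / n) with hw
  have hterm : ∀ t : ℕ, Real.cos (2 * Real.pi * m * ((t + 1 : ℕ) : ℝ) / n + φ)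
      = (Complex.exp (φ * Complex.I) * (w ^ m) * (w ^ m) ^ t).re := by
    intro t
    rw [mul_assoc (Complex.exp _), ← pow_succ', hw, ← Complex.exp_int_mul, ← Complex.exp_nat_mul,
      ← Complex.exp_add, ← Complex.exp_ofReal_mul_I_re]
    congr 2
    push_cast
    field_simp
    ring
  rw [Finset.sum_congr rfl (fun (t : Fin n) _ => hterm t.val), ← Complex.re_sum, ← Finset.mul_sum,
    Fin.sum_univ_eq_sum_range (fun t => (w ^ m) ^ t) n]
  split_ifs with h
  · rw [(hprim.zpow_eq_one_iff_dvd m).2 h]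
    simp [Complex.exp_ofReal_mul_I_re]
    ring
  · have h1 : w ^ m ≠ 1 := fun h' => h ((hprim.zpow_eq_one_iff_dvd m).1 h')
    have h2 : (w ^ m) ^ n = 1 := by
      rw [← _root_.zpow_natCast, ← _root_.zpow_mul, mul_comm, _root_.zpow_mul, _root_.zpow_natCast,
        hprim.pow_eq_one, _root_.one_zpow]
    rw [geom_sum_eq h1, h2]
    simp

noncomputable def amp (n r : ℕ) : ℝ :=
  if r = 0 ∨ (n % 2 = 0 ∧ r = n - 1) then 1 / Real.sqrt n else Real.sqrt 2 / Real.sqrt n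

noncomputable def phs (r : ℕ) : ℝ := if r = 0 ∨ r % 2 = 1 then 0 else Real.pi / 2

lemma Fmat_eq (n : ℕ) (r t : Fin n) : Fmat n r t = amp n r *
    Real.cos (2 * Real.pi * (((r.val + 1) / 2 : ℕ) : ℝ) * (((t : ℕ) + 1 : ℕ) : ℝ) / n + phs r) := by
  have hr := r.2
  unfold Fmat amp phs
  simp only [Matrix.of_apply]
  by_cases h0 : r.val = 0
  · simp [h0]
  by_cases h1 : n % 2 = 0 ∧ r.val = n - 1
  · have h2 : r.val % 2 = 1 := by omega
    have h3 : (n : ℝ) = 2 * (((r.val + 1) / 2 : ℕ) : ℝ) := by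
      exact_mod_cast (by omega : n = 2 * ((r.val + 1) / 2))
    have h4 : (n : ℝ) ≠ 0 := by
      have : n ≠ 0 := by omega
      exact_mod_cast this
    have h5 : 2 * Real.pi * (((r.val + 1) / 2 : ℕ) : ℝ) * (((t : ℕ) + 1 : ℕ) : ℝ) / n
        = (((t : ℕ) + 1 : ℕ) : ℝ) * Real.pi := by
      rw [div_eq_iff h4]
      linear_combination (- Real.pi * (((t : ℕ) + 1 : ℕ) : ℝ)) * h3
    rw [if_neg h0, if_pos h1, if_pos (Or.inr h1), if_pos (Or.inr h2), add_zero, h5,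
      Real.cos_nat_mul_pi]
    ring
  · have h3 : ¬ (r.val = 0 ∨ (n % 2 = 0 ∧ r.val = n - 1)) := by tauto
    rw [if_neg h0, if_neg h1, if_neg h3]
    by_cases h2 : r.val % 2 = 1
    · simp [h2]
    · rw [if_neg h2, if_neg (by tauto), Real.cos_add_pi_div_two,
        show (r.val + 1) / 2 = r.val / 2 by omega]
      ring

lemma amp_sq (n : ℕ) (r : ℕ) : amp n r * amp n r * n =
    if n = 0 then 0 else if r = 0 ∨ (n % 2 = 0 ∧ r = n - 1) then 1 else 2 := by
  by_cases hn : n = 0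
  · simp [hn]
  have h1 : (0:ℝ) < n := by positivity
  have h2 : Real.sqrt n * Real.sqrt n = n := Real.mul_self_sqrt h1.le
  have h3 : Real.sqrt n ≠ 0 := (Real.sqrt_pos.2 h1).ne'
  have h4 : Real.sqrt 2 * Real.sqrt 2 = 2 := Real.mul_self_sqrt (by norm_num)
  rw [if_neg hn]
  unfold amp
  split_ifs
  · rw [div_mul_div_comm, h2]; field_simp
  · rw [div_mul_div_comm, h2, h4]; field_simp

lemma Fmat_orth (n : ℕ) (hn : 1 ≤ n) : Fmat n * (Fmat n)ᵀ = 1 := by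
  ext r s
  have hr := r.2
  have hs := s.2
  rw [Matrix.mul_apply, Matrix.one_apply]
  set k : ℕ := (r.val + 1) / 2 with hk
  set l : ℕ := (s.val + 1) / 2 with hl
  have key : ∀ t : Fin n, Fmat n r t * (Fmat n)ᵀ t s = amp n r * amp n s / 2 *
      (Real.cos (2 * Real.pi * (((k : ℤ) - l : ℤ) : ℝ) * (((t : ℕ) + 1 : ℕ) : ℝ) / n + (phs r - phs s))
      + Real.cos (2 * Real.pi * (((k : ℤ) + l : ℤ) : ℝ) * (((t : ℕ) + 1 : ℕ) : ℝ) / n + (phs r + phs s))) := by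
    intro t
    rw [Matrix.transpose_apply, Fmat_eq, Fmat_eq, ← hk, ← hl]
    set a := 2 * Real.pi * (k : ℝ) * (((t : ℕ) + 1 : ℕ) : ℝ) / n + phs r with ha
    set b := 2 * Real.pi * (l : ℝ) * (((t : ℕ) + 1 : ℕ) : ℝ) / n + phs s with hb
    have e1 : 2 * Real.pi * (((k : ℤ) - l : ℤ) : ℝ) * (((t : ℕ) + 1 : ℕ) : ℝ) / n + (phs r - phs s)
        = a - b := by rw [ha, hb]; push_cast; ring
    have e2 : 2 * Real.pi * (((k : ℤ) + l : ℤ) : ℝ) * (((t : ℕ) + 1 : ℕ) : ℝ) / n + (phs r + phs s)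
        = a + b := by rw [ha, hb]; push_cast; ring
    rw [e1, e2, Real.cos_sub a b, Real.cos_add a b]
    ring
  rw [Finset.sum_congr rfl (fun t _ => key t), ← Finset.mul_sum, Finset.sum_add_distrib,
    sum_cos_aux n hn, sum_cos_aux n hn]
  have d1 : (n : ℤ) ∣ (k : ℤ) - l ↔ k = l := by
    constructor
    · intro h
      have := Int.eq_zero_of_abs_lt_dvd h (by rw [abs_lt]; omega)
      omega
    · rintro h; simp [h]
  have d2 : (n : ℤ) ∣ (k : ℤ) + l ↔ (k + l = 0 ∨ k + l = n) := by
    constructor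
    · rintro ⟨c, hc⟩
      have h1 : (k : ℤ) + l ≤ n := by omega
      have h0 : (0 : ℤ) ≤ (k : ℤ) + l := by omega
      have h2 : c ≤ 1 := by nlinarith
      have h3 : 0 ≤ c := by nlinarith
      obtain rfl | rfl : c = 0 ∨ c = 1 := by omega
      · left; omega
      · right; omega
    · rintro (h | h)
      · have : (k : ℤ) + l = 0 := by omega
        rw [this]; exact dvd_zero _
      · have : (k : ℤ) + l = n := by omega
        rw [this]
  simp only [d1, d2]
  by_cases hrs : r = s
  · subst hrs
    have ha := amp_sq n r
    rw [if_neg (by omega)] at ha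
    by_cases hc : r.val = 0 ∨ (n % 2 = 0 ∧ r.val = n - 1)
    · have hp : phs r = 0 := by
        unfold phs; rw [if_pos (by omega)]
      rw [if_pos hc] at ha
      rw [if_pos rfl, if_pos (by omega), if_pos rfl, hp]
      simp only [sub_zero, add_zero, Real.cos_zero]
      linear_combination ha
    · rw [if_neg hc] at ha
      rw [if_pos rfl, if_neg (by omega), if_pos rfl, sub_self, Real.cos_zero]
      linear_combination ha / 2
  · have hne : r.val ≠ s.val := fun h => hrs (Fin.ext h)
    rw [if_neg hrs]
    by_cases hkl : k = l
    · rw [if_pos hkl, if_neg (by omega)]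
      have : Real.cos (phs r - phs s) = 0 := by
        unfold phs
        by_cases h : r.val % 2 = 1
        · rw [if_pos (by omega), if_neg (by omega)]; simp
        · rw [if_neg (by omega), if_pos (by omega)]; simp
      rw [this]; simp
    · rw [if_neg hkl, if_neg (by omega)]; simp

/-- the nonparametrically corrected likelihood of the i.i.d. `N(0,σ²)`
working model does not depend on `σ` and equals the Whittle likelihood. -/
theorem statement3 (n : ℕ) (hn : 1 ≤ n) (f : ℝ → ℝ)
    (hf : ∀ x ∈ Set.Icc 0 (2 * Real.pi), 0 < f x)
    (σ : ℝ) (hσ : 0 < σ) (z : Fin n → ℝ) :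
    let C : Matrix (Fin n) (Fin n) ℝ := (σ ^ 2)⁻¹ • Dmat n f
    let v : Fin n → ℝ := ((Fmat n)ᵀ * diagRPow n C (-(1 / 2)) * Fmat n).mulVec z
    C.det ^ (-(1 : ℝ) / 2) * (2 * Real.pi * σ ^ 2) ^ (-(n : ℝ) / 2) *
        Real.exp (-(v ⬝ᵥ v) / (2 * σ ^ 2)) =
      (2 * Real.pi) ^ (-(n : ℝ) / 2) * (Dmat n f).det ^ (-(1 : ℝ) / 2) *
        Real.exp (-(1 / 2) *
          ((Fmat n).mulVec z ⬝ᵥ ((Dmat n f)⁻¹).mulVec ((Fmat n).mulVec z))) := by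
  intro C v
  have hpi := Real.pi_pos
  have hσ2 : 0 < σ ^ 2 := by positivity
  set d : Fin n → ℝ := fun r => 2 * Real.pi * f (fourierFreq n ((r.val + 1) / 2)) with hd
  have hD : Dmat n f = Matrix.diagonal d := rfl
  have hdpos : ∀ r, 0 < d r := by
    intro r
    have hr := r.2
    have hn0 : (0 : ℝ) < n := by exact_mod_cast hn
    refine mul_pos (by positivity) (hf _ ⟨by unfold fourierFreq; positivity, ?_⟩)
    unfold fourierFreq
    rw [div_le_iff₀ hn0]
    have : (((r.val + 1) / 2 : ℕ) : ℝ) ≤ n := by exact_mod_cast (by omega)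
    exact mul_le_mul_of_nonneg_left this (by positivity)
  have hdet : 0 < (Dmat n f).det := by
    rw [hD, Matrix.det_diagonal]; exact Finset.prod_pos fun i _ => hdpos i
  have hCdet : C.det = (σ ^ 2)⁻¹ ^ n * (Dmat n f).det := by
    simp only [C]; rw [Matrix.det_smul, Fintype.card_fin]
  have hpre : C.det ^ (-(1 : ℝ) / 2) * (2 * Real.pi * σ ^ 2) ^ (-(n : ℝ) / 2)
      = (2 * Real.pi) ^ (-(n : ℝ) / 2) * (Dmat n f).det ^ (-(1 : ℝ) / 2) := by
    rw [hCdet, Real.mul_rpow (by positivity) hdet.le, Real.mul_rpow (by positivity) hσ2.le,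
      ← Real.rpow_natCast, ← Real.rpow_mul (by positivity), Real.inv_rpow hσ2.le,
      show (n : ℝ) * (-(1 : ℝ) / 2) = -(n : ℝ) / 2 by ring]
    have : (σ ^ 2) ^ (-(n : ℝ) / 2) ≠ 0 := (Real.rpow_pos_of_pos hσ2 _).ne'
    field_simp
  rw [hpre]
  congr 2
  set y := (Fmat n).mulVec z with hy
  have hinv : (Dmat n f)⁻¹ = Matrix.diagonal fun i => (d i)⁻¹ := by
    apply Matrix.inv_eq_left_inv
    rw [hD, Matrix.diagonal_mul_diagonal, ← Matrix.diagonal_one]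
    congr 1; funext i
    exact inv_mul_cancel₀ (hdpos i).ne'
  have hv : v = (Fmat n)ᵀ.mulVec ((diagRPow n C (-(1 / 2))).mulVec y) := by
    simp only [v, hy, Matrix.mulVec_mulVec, Matrix.mul_assoc]
  have hvv : v ⬝ᵥ v = (diagRPow n C (-(1 / 2))).mulVec y ⬝ᵥ (diagRPow n C (-(1 / 2))).mulVec y := by
    rw [hv, Matrix.dotProduct_mulVec, Matrix.vecMul_transpose, Matrix.mulVec_mulVec,
      Fmat_orth n hn, Matrix.one_mulVec]
  rw [hvv, hinv]
  unfold diagRPow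
  simp only [dotProduct, Matrix.mulVec_diagonal]
  rw [← Finset.sum_neg_distrib, Finset.sum_div, Finset.mul_sum]
  refine Finset.sum_congr rfl fun i _ => ?_
  have hCi : C i i = (σ ^ 2)⁻¹ * d i := by
    simp [C, hD]
  have hdi := hdpos i
  have hsq : (C i i) ^ (-(1 / 2) : ℝ) * (C i i) ^ (-(1 / 2) : ℝ) = σ ^ 2 * (d i)⁻¹ := by
    have : 0 < C i i := by rw [hCi]; positivity
    rw [← Real.rpow_add this, show (-(1 / 2) + -(1 / 2) : ℝ) = -1 by norm_num, Real.rpow_neg_one, hCi,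
      mul_inv, inv_inv]
  rw [show (C i i) ^ (-(1 / 2) : ℝ) * y i * ((C i i) ^ (-(1 / 2) : ℝ) * y i)
    = ((C i i) ^ (-(1 / 2) : ℝ) * (C i i) ^ (-(1 / 2) : ℝ)) * (y i * y i) by ring, hsq]
  field_simp
end

section
/- Let n ≥ 1 and f, f_param : [0,2π] → (0,∞), and set C = C_n(f, f_param). Then for every y ∈ ℝ^n and every 0 ≤ j ≤ ⌊n/2⌋, the periodogram satisfies the scaling identity I_{n,λ_j}(F_n^T C^{1/2} F_n y) = (f(λ_j)/f_param(λ_j)) · I_{n,λ_j}(y). -/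
open MeasureTheory Matrix Filter

noncomputable def EE (n : ℕ) (k : ℤ) (t : ℕ) : ℂ :=
  Complex.exp (2 * Real.pi * Complex.I * k * ((t + 1 : ℕ) : ℂ) / n)

lemma EE_add (n : ℕ) (k l : ℤ) (t : ℕ) : EE n k t * EE n l t = EE n (k + l) t := by
  unfold EE
  rw [← Complex.exp_add]
  congr 1
  push_cast
  ring

lemma EE_zero (n : ℕ) (t : ℕ) : EE n 0 t = 1 := by simp [EE]

lemma EE_sum_zero (n : ℕ) : ∑ t : Fin n, EE n 0 t = n := by simp [EE_zero]

lemma EE_sum (n : ℕ) (hn : 1 ≤ n) (k : ℤ) (hk : ¬ (n : ℤ) ∣ k) :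
    ∑ t : Fin n, EE n k t = 0 := by
  have hn0 : (n : ℂ) ≠ 0 := by exact_mod_cast (by omega : n ≠ 0)
  set z : ℂ := Complex.exp (2 * Real.pi * Complex.I * k / n) with hz
  have hE : ∀ t : ℕ, EE n k t = z * z ^ t := by
    intro t
    rw [← pow_succ', hz, ← Complex.exp_nat_mul, EE]
    congr 1
    ring
  have hzn : z ^ n = 1 := by
    rw [hz, ← Complex.exp_nat_mul, Complex.exp_eq_one_iff]
    refine ⟨k, ?_⟩
    field_simp
  have hz1 : z ≠ 1 := by
    intro h
    rw [hz, Complex.exp_eq_one_iff] at h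
    obtain ⟨m, hm⟩ := h
    apply hk
    refine ⟨m, ?_⟩
    have hpi : (Real.pi : ℂ) ≠ 0 := by exact_mod_cast Real.pi_ne_zero
    have hI := Complex.I_ne_zero
    field_simp at hm
    have : (k : ℂ) = ((n * m : ℤ) : ℂ) := by push_cast; linear_combination hm
    exact_mod_cast this
  simp_rw [hE]
  rw [← Finset.mul_sum, Fin.sum_univ_eq_sum_range (fun t => z ^ t) n]
  have := geom_sum_mul z n
  rw [hzn, sub_self] at this
  rcases mul_eq_zero.mp this with h | h
  · rw [h, mul_zero]
  · exact absurd (sub_eq_zero.mp h) hz1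

lemma w_eq (n j t : ℕ) :
    Complex.exp (-Complex.I * ((t + 1 : ℕ) : ℂ) * (fourierFreq n j : ℂ)) = EE n (-j) t := by
  unfold EE fourierFreq
  congr 1
  push_cast
  ring

lemma cos_eq (n m t : ℕ) :
    ((Real.cos (2 * Real.pi * (m : ℝ) * ((t + 1 : ℕ) : ℝ) / n) : ℝ) : ℂ)
      = (EE n m t + EE n (-m) t) / 2 := by
  rw [Complex.ofReal_cos, Complex.cos, EE, EE]
  congr 3 <;> (push_cast; ring)

lemma sin_eq (n m t : ℕ) :
    ((Real.sin (2 * Real.pi * (m : ℝ) * ((t + 1 : ℕ) : ℝ) / n) : ℝ) : ℂ)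
      = (EE n (-m) t - EE n m t) * Complex.I / 2 := by
  rw [Complex.ofReal_sin, Complex.sin, EE, EE]
  congr 4 <;> (push_cast; ring)

lemma half_eq (m t : ℕ) (hm : 1 ≤ m) : ((-1 : ℂ)) ^ (t + 1) = EE (2 * m) m t := by
  have hm0 : (m : ℂ) ≠ 0 := by exact_mod_cast (by omega : m ≠ 0)
  rw [← Complex.exp_pi_mul_I, ← Complex.exp_nat_mul, EE]
  congr 1
  push_cast
  field_simp

/-- row-wise Fourier coefficient -/
noncomputable def G (n j : ℕ) (r : Fin n) : ℂ := ∑ t : Fin n, (Fmat n r t : ℂ) * EE n (-j) t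

lemma not_dvd {n : ℕ} {k : ℤ} (h0 : k ≠ 0) (h1 : k < n) (h2 : -n < k) : ¬ (n : ℤ) ∣ k := by
  intro h
  exact h0 (Int.eq_zero_of_abs_lt_dvd h (abs_lt.mpr ⟨h2, h1⟩))

lemma F0 (n : ℕ) (r t : Fin n) (h : r.val = 0) : (Fmat n r t : ℂ) = 1 / (Real.sqrt n : ℂ) := by
  simp [Fmat, h]

lemma Fh (m : ℕ) (r t : Fin (2 * m)) (h : r.val = 2 * m - 1) :
    (Fmat (2 * m) r t : ℂ) = EE (2 * m) m t / (Real.sqrt (2 * m : ℕ) : ℂ) := by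
  have hr := r.2
  rw [← half_eq m t (by omega)]
  have h0 : r.val ≠ 0 := by omega
  have h1 : (2 * m) % 2 = 0 ∧ r.val = 2 * m - 1 := ⟨by omega, h⟩
  simp only [Fmat, Matrix.of_apply, if_neg h0, if_pos h1]
  push_cast
  rfl

lemma Fc (n m : ℕ) (r t : Fin n) (h1 : 1 ≤ m) (h2 : 2 * m < n) (h : r.val = 2 * m - 1) :
    (Fmat n r t : ℂ) = (Real.sqrt 2 : ℂ) / (Real.sqrt n : ℂ) * ((EE n m t + EE n (-m) t) / 2) := by
  rw [← cos_eq]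
  have h0 : r.val ≠ 0 := by omega
  have h3 : ¬ (n % 2 = 0 ∧ r.val = n - 1) := by omega
  have h4 : r.val % 2 = 1 := by omega
  have h5 : (r.val + 1) / 2 = m := by omega
  simp only [Fmat, Matrix.of_apply, if_neg h0, if_neg h3, if_pos h4, h5]
  rw [Complex.ofReal_mul, Complex.ofReal_div]

lemma Fs (n m : ℕ) (r t : Fin n) (h1 : 1 ≤ m) (h2 : 2 * m < n) (h : r.val = 2 * m) :
    (Fmat n r t : ℂ) =
      -((Real.sqrt 2 : ℂ) / (Real.sqrt n : ℂ)) * ((EE n (-m) t - EE n m t) * Complex.I / 2) := by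
  rw [← sin_eq]
  have h0 : r.val ≠ 0 := by omega
  have h3 : ¬ (n % 2 = 0 ∧ r.val = n - 1) := by omega
  have h4 : ¬ r.val % 2 = 1 := by omega
  have h5 : r.val / 2 = m := by omega
  simp only [Fmat, Matrix.of_apply, if_neg h0, if_neg h3, if_neg h4, h5]
  rw [Complex.ofReal_mul, Complex.ofReal_neg, Complex.ofReal_div]

lemma G0 (n j : ℕ) (r : Fin n) (h : r.val = 0) :
    G n j r = 1 / (Real.sqrt n : ℂ) * ∑ t : Fin n, EE n (-j) t := by
  simp only [G, F0 n r _ h, Finset.mul_sum]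

lemma Gh (m j : ℕ) (r : Fin (2 * m)) (h : r.val = 2 * m - 1) :
    G (2 * m) j r = 1 / (Real.sqrt (2 * m : ℕ) : ℂ) * ∑ t : Fin (2 * m), EE (2 * m) (m - j) t := by
  simp only [G, Fh m r _ h, Finset.mul_sum, sub_eq_add_neg, ← EE_add]
  exact Finset.sum_congr rfl fun t _ => by ring

lemma Gc (n m j : ℕ) (r : Fin n) (h1 : 1 ≤ m) (h2 : 2 * m < n) (h : r.val = 2 * m - 1) :
    G n j r = (Real.sqrt 2 : ℂ) / (Real.sqrt n : ℂ) / 2 *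
      (∑ t : Fin n, EE n (m - j) t + ∑ t : Fin n, EE n (-m - j) t) := by
  simp only [G, Fc n m r _ h1 h2 h, ← Finset.sum_add_distrib, Finset.mul_sum, sub_eq_add_neg,
    ← EE_add]
  exact Finset.sum_congr rfl fun t _ => by ring

lemma Gs (n m j : ℕ) (r : Fin n) (h1 : 1 ≤ m) (h2 : 2 * m < n) (h : r.val = 2 * m) :
    G n j r = -((Real.sqrt 2 : ℂ) / (Real.sqrt n : ℂ)) * Complex.I / 2 *
      (∑ t : Fin n, EE n (-m - j) t - ∑ t : Fin n, EE n (m - j) t) := by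
  rw [← Finset.sum_sub_distrib]
  simp only [G, Fs n m r _ h1 h2 h, Finset.mul_sum]
  refine Finset.sum_congr rfl fun t _ => ?_
  rw [sub_eq_add_neg (-(m : ℤ)), sub_eq_add_neg (m : ℤ), ← EE_add, ← EE_add]
  ring

lemma G_zero (n j : ℕ) (hj : j ≤ n / 2) (r : Fin n) (h : (r.val + 1) / 2 ≠ j) : G n j r = 0 := by
  have hr := r.2
  have hn : 1 ≤ n := by omega
  by_cases h0 : r.val = 0
  · rw [G0 n j r h0, EE_sum n hn _ (not_dvd (by omega) (by omega) (by omega)), mul_zero]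
  by_cases hh : n % 2 = 0 ∧ r.val = n - 1
  · obtain ⟨m, rfl⟩ : ∃ m, n = 2 * m := ⟨n / 2, by omega⟩
    rw [Gh m j r hh.2, EE_sum _ hn _ (not_dvd (by omega) (by omega) (by omega)), mul_zero]
  by_cases ho : r.val % 2 = 1
  · rw [Gc n ((r.val + 1) / 2) j r (by omega) (by omega) (by omega),
      EE_sum n hn _ (not_dvd (by omega) (by omega) (by omega)),
      EE_sum n hn _ (not_dvd (by omega) (by omega) (by omega)), add_zero, mul_zero]
  · rw [Gs n ((r.val + 1) / 2) j r (by omega) (by omega) (by omega),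
      EE_sum n hn _ (not_dvd (by omega) (by omega) (by omega)),
      EE_sum n hn _ (not_dvd (by omega) (by omega) (by omega)), sub_zero, mul_zero]

lemma FG (n j : ℕ) (hj : j ≤ n / 2) (s : Fin n) :
    ∑ r : Fin n, (Fmat n r s : ℂ) * G n j r = EE n (-j) s := by
  have hs := s.2
  have hn : 1 ≤ n := by omega
  have hq : (Real.sqrt n : ℂ) * (Real.sqrt n : ℂ) = n := by
    rw [← Complex.ofReal_mul, Real.mul_self_sqrt (by positivity)]; simp
  have h2 : (Real.sqrt 2 : ℂ) * (Real.sqrt 2 : ℂ) = 2 := by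
    rw [← Complex.ofReal_mul, Real.mul_self_sqrt (by positivity)]; simp
  have hn0 : (n : ℂ) ≠ 0 := by exact_mod_cast (by omega : n ≠ 0)
  have hq0 : (Real.sqrt n : ℂ) ≠ 0 := by
    intro h; rw [h] at hq; simp at hq; exact hn0 hq.symm
  by_cases h0 : j = 0
  · subst h0
    rw [Fintype.sum_eq_single (⟨0, by omega⟩ : Fin n)]
    · rw [F0 _ _ _ rfl, G0 _ _ _ rfl]
      simp only [Nat.cast_zero, neg_zero]
      rw [EE_sum_zero, EE_zero, ← hq]
      field_simp
    · intro r hr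
      rw [G_zero n 0 hj r, mul_zero]
      intro h
      exact hr (Fin.ext (show r.val = 0 by omega))
  by_cases hh : n = 2 * j
  · subst hh
    rw [Fintype.sum_eq_single (⟨2 * j - 1, by omega⟩ : Fin (2 * j))]
    · rw [Fh _ _ _ rfl, Gh _ _ _ rfl, sub_self, EE_sum_zero, ← hq]
      have : EE (2 * j) (-j) s = EE (2 * j) j s := by
        rw [← half_eq j s (by omega)]
        have h1 := EE_add (2 * j) (-j) j s
        rw [neg_add_cancel, EE_zero, ← half_eq j s (by omega)] at h1
        have h3 : ((-1 : ℂ) ^ (s.val + 1)) * (-1) ^ (s.val + 1) = 1 := by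
          rw [← mul_pow]; simp
        have h4 : ((-1 : ℂ) ^ (s.val + 1)) ≠ 0 := by simp
        exact mul_right_cancel₀ h4 (h1.trans h3.symm)
      rw [this]
      field_simp
    · intro r hr
      rw [G_zero _ j hj r, mul_zero]
      intro h
      have := r.2
      exact hr (Fin.ext (show r.val = 2 * j - 1 by omega))
  · rw [Fintype.sum_eq_add (⟨2 * j - 1, by omega⟩ : Fin n) ⟨2 * j, by omega⟩]
    · rw [Fc n j _ _ (by omega) (by omega) rfl, Gc n j _ _ (by omega) (by omega) rfl,
        Fs n j _ _ (by omega) (by omega) rfl, Gs n j _ _ (by omega) (by omega) rfl, sub_self,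
        EE_sum_zero, EE_sum n hn (-j - j) (not_dvd (by omega) (by omega) (by omega)), ← hq]
      field_simp
      linear_combination (√n:ℂ) ^ 2 * (2 * EE n (-j) s) * h2 +
        (√n:ℂ) ^ 2 * (√2:ℂ) * (√2:ℂ) * (EE n j s - EE n (-j) s) * Complex.I_sq
    · intro h
      have := congrArg Fin.val h
      simp only at this
      omega
    · rintro r ⟨hr1, hr2⟩
      rw [G_zero _ j hj r, mul_zero]
      intro h
      by_cases h5 : r.val = 2 * j
      · exact hr2 (Fin.ext h5)
      · exact hr1 (Fin.ext (show r.val = 2 * j - 1 by omega))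

/-- scaling identity of the periodogram under the correction map
`y ↦ F_nᵀ C_n^{1/2} F_n y`. -/
theorem statement6 (n : ℕ) (hn : 1 ≤ n) (f fp : ℝ → ℝ)
    (hf : ∀ x ∈ Set.Icc 0 (2 * Real.pi), 0 < f x)
    (hfp : ∀ x ∈ Set.Icc 0 (2 * Real.pi), 0 < fp x)
    (y : Fin n → ℝ) (j : ℕ) (hj : j ≤ n / 2) :
    periodogram n (fourierFreq n j)
        (((Fmat n)ᵀ * diagRPow n (Cmat n f fp) (1 / 2) * Fmat n).mulVec y) =
      f (fourierFreq n j) / fp (fourierFreq n j) * periodogram n (fourierFreq n j) y := by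
  have hpi := Real.pi_pos
  have hn0 : (0 : ℝ) < n := by exact_mod_cast hn
  have hmem : fourierFreq n j ∈ Set.Icc 0 (2 * Real.pi) := by
    have hjn : (j : ℝ) ≤ n := by exact_mod_cast (by omega : j ≤ n)
    unfold fourierFreq
    constructor
    · positivity
    · rw [div_le_iff₀ hn0]
      gcongr
  have hc : 0 < f (fourierFreq n j) / fp (fourierFreq n j) := div_pos (hf _ hmem) (hfp _ hmem)
  set c := f (fourierFreq n j) / fp (fourierFreq n j) with hcdef
  unfold periodogram
  simp_rw [w_eq]
  have key : ∑ t : Fin n, (((((Fmat n)ᵀ * diagRPow n (Cmat n f fp) (1 / 2) * Fmat n).mulVec y) t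
      : ℝ) : ℂ) * EE n (-j) t = ((c ^ (1 / 2 : ℝ) : ℝ) : ℂ) * ∑ t : Fin n, (y t : ℂ) * EE n (-j) t := by
    have e1 : ∀ t : Fin n, (((Fmat n)ᵀ * diagRPow n (Cmat n f fp) (1 / 2) * Fmat n).mulVec y) t
        = ∑ r : Fin n, Fmat n r t * ((Cmat n f fp r r) ^ (1 / 2 : ℝ) * (Fmat n).mulVec y r) := by
      intro t
      rw [← Matrix.mulVec_mulVec, ← Matrix.mulVec_mulVec]
      simp only [diagRPow, Matrix.mulVec_diagonal]
      simp only [Matrix.mulVec, dotProduct, Matrix.transpose_apply, Matrix.diagonal_apply,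
        ite_mul, zero_mul, Finset.sum_ite_eq, Finset.mem_univ, if_true]
    calc _ = ∑ r : Fin n, ((((Cmat n f fp r r) ^ (1 / 2 : ℝ) : ℝ) : ℂ) *
            (((Fmat n).mulVec y r : ℝ) : ℂ)) * G n j r := by
          simp only [e1, G, Complex.ofReal_sum, Complex.ofReal_mul, Finset.sum_mul, Finset.mul_sum]
          rw [Finset.sum_comm]
          exact Finset.sum_congr rfl fun r _ => Finset.sum_congr rfl fun t _ => by ring
      _ = ∑ r : Fin n, (((c ^ (1 / 2 : ℝ) : ℝ) : ℂ) * (((Fmat n).mulVec y r : ℝ) : ℂ)) * G n j r := by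
          refine Finset.sum_congr rfl fun r _ => ?_
          by_cases h : (r.val + 1) / 2 = j
          · rw [Cmat, Matrix.diagonal_apply_eq, h]
          · rw [G_zero n j hj r h, mul_zero, mul_zero]
      _ = _ := by
          simp only [← FG n j hj, Matrix.mulVec, dotProduct, Complex.ofReal_sum,
            Complex.ofReal_mul, Finset.sum_mul, Finset.mul_sum]
          rw [Finset.sum_comm]
          exact Finset.sum_congr rfl fun r _ => Finset.sum_congr rfl fun t _ => by ring
  rw [key, Complex.normSq_mul, Complex.normSq_ofReal, ← Real.rpow_add hc]
  norm_num
  ring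
end

section
/- Let γ : ℤ → ℝ satisfy γ(−h) = γ(h) for all h and Σ_{h∈ℤ} |γ(h)| < ∞, and define the spectral density f(λ) = (1/(2π)) Σ_{h∈ℤ} γ(h) e^{−ihλ} for λ ∈ ℝ (which is real-valued). Then sup_{λ∈ℝ} | (1/(2πn)) Σ_{s=1}^n Σ_{t=1}^n γ(s−t) e^{−i(s−t)λ} − f(λ) | → 0 as n → ∞; equivalently, sup_{λ∈ℝ} | (1/(2π)) Σ_{|h|≤n−1} (1 − |h|/n) γ(h) e^{−ihλ} − f(λ) | → 0. (This is the uniform asymptotic unbiasedness of the mean of the periodogram of a zero-mean stationary process with absolutely summable autocovariance function γ.) -/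
open MeasureTheory Filter

/-- number of pairs `(s,t)` in `[1,n]²` with `s - t = h` -/
noncomputable def cnt (n : ℕ) (h : ℤ) : ℕ :=
  ((Finset.Icc (1 : ℤ) n).filter (fun s => s - h ∈ Finset.Icc (1 : ℤ) n)).card

lemma cnt_eq (n : ℕ) (h : ℤ) : (cnt n h : ℤ) = max 0 (n - |h|) := by
  have : (Finset.Icc (1 : ℤ) n).filter (fun s => s - h ∈ Finset.Icc (1 : ℤ) n)
      = Finset.Icc (max 1 (1 + h)) (min n (n + h)) := by
    ext s
    simp only [Finset.mem_filter, Finset.mem_Icc]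
    omega
  rw [cnt, this, Int.card_Icc]
  rcases abs_cases h with ⟨h1, h2⟩ | ⟨h1, h2⟩ <;> rw [h1] <;> omega

lemma cnt_le (n : ℕ) (h : ℤ) : (cnt n h : ℝ) ≤ n := by
  have h1 := cnt_eq n h
  have h2 := abs_nonneg h
  have : (cnt n h : ℤ) ≤ n := by omega
  exact_mod_cast this

lemma le_cnt (n : ℕ) (h : ℤ) : (n : ℝ) - |(h : ℝ)| ≤ cnt n h := by
  have h1 := cnt_eq n h
  have : (n : ℤ) - |h| ≤ cnt n h := by omega
  exact_mod_cast this

lemma sum_eq (g : ℤ → ℂ) (hg : Summable g) (n : ℕ) :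
    ∑ s ∈ Finset.Icc (1 : ℤ) n, ∑ t ∈ Finset.Icc (1 : ℤ) n, g (s - t)
      = ∑' h : ℤ, (cnt n h : ℂ) * g h := by
  have key : ∀ s : ℤ, HasSum (fun h => if s - h ∈ Finset.Icc (1 : ℤ) n then g h else 0)
      (∑ t ∈ Finset.Icc (1 : ℤ) n, g (s - t)) := by
    intro s
    rw [← (Equiv.subLeft s).hasSum_iff]
    have h1 := hasSum_sum_of_ne_finset_zero (L := SummationFilter.unconditional ℤ)
      (f := fun t => if t ∈ Finset.Icc (1 : ℤ) n then g (s - t) else 0)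
      (s := Finset.Icc (1 : ℤ) n) (fun b hb => if_neg hb)
    rw [Finset.sum_congr rfl (fun t ht => if_pos ht)] at h1
    convert h1 using 2 with t
    simp only [Function.comp_apply, Equiv.subLeft_apply, sub_sub_cancel]
  have h2 := hasSum_sum (s := Finset.Icc (1 : ℤ) n) (fun s _ => key s)
  rw [← h2.tsum_eq]
  congr 1
  ext h
  rw [← Finset.sum_filter, Finset.sum_const, nsmul_eq_mul, cnt]

/-- uniform asymptotic unbiasedness of the mean of the periodogram:
the Cesàro mean `(2πn)⁻¹ ∑_{s,t=1}^n γ(s-t) e^{-i(s-t)λ}` converges to the spectral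
density `f(λ) = (2π)⁻¹ ∑_{h∈ℤ} γ(h) e^{-ihλ}` uniformly in `λ`. -/
theorem statement9 (γ : ℤ → ℝ) (heven : ∀ h : ℤ, γ (-h) = γ h)
    (hsum : Summable fun h : ℤ => |γ h|) :
    Tendsto (fun n : ℕ => ⨆ lam : ℝ,
      ‖(1 / (2 * Real.pi * n) : ℂ) *
          ∑ s ∈ Finset.Icc (1 : ℤ) n, ∑ t ∈ Finset.Icc (1 : ℤ) n,
            (γ (s - t) : ℂ) * Complex.exp (-Complex.I * ((s - t : ℤ) : ℂ) * (lam : ℂ)) -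
        (1 / (2 * Real.pi) : ℂ) *
          ∑' h : ℤ, (γ h : ℂ) * Complex.exp (-Complex.I * (h : ℂ) * (lam : ℂ))‖)
      atTop (nhds 0) := by
  have hb : ∀ (n : ℕ) (h : ℤ), 1 ≤ n → 0 ≤ 1 - (cnt n h : ℝ) / n ∧ 1 - (cnt n h : ℝ) / n ≤ 1 ∧
      1 - (cnt n h : ℝ) / n ≤ |(h : ℝ)| / n := by
    intro n h hn
    have hn' : (0 : ℝ) < n := by exact_mod_cast hn
    have h1 := cnt_le n h
    have h2 := le_cnt n h
    refine ⟨?_, ?_, ?_⟩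
    · rw [sub_nonneg, div_le_one hn']; exact h1
    · have : 0 ≤ (cnt n h : ℝ) / n := by positivity
      linarith
    · rw [sub_le_iff_le_add, ← add_div, le_div_iff₀ hn']; linarith
  have hlim : Tendsto (fun n : ℕ => ∑' h : ℤ, (1 - (cnt n h : ℝ) / n) * |γ h|) atTop (nhds 0) := by
    have := tendsto_tsum_of_dominated_convergence (𝓕 := atTop)
      (f := fun (n : ℕ) (h : ℤ) => (1 - (cnt n h : ℝ) / n) * |γ h|)
      (g := fun _ => (0 : ℝ)) hsum ?_ ?_
    · simpa using this
    · intro h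
      have h0 : Tendsto (fun n : ℕ => 1 - (cnt n h : ℝ) / n) atTop (nhds 0) := by
        refine tendsto_of_tendsto_of_tendsto_of_le_of_le' tendsto_const_nhds
          (tendsto_const_div_atTop_nhds_zero_nat |(h : ℝ)|) ?_ ?_
        · filter_upwards [eventually_ge_atTop 1] with n hn using (hb n h hn).1
        · filter_upwards [eventually_ge_atTop 1] with n hn using (hb n h hn).2.2
      simpa using h0.mul_const |γ h|
    · filter_upwards [eventually_ge_atTop 1] with n hn h
      rw [Real.norm_eq_abs, abs_mul, abs_abs, abs_of_nonneg (hb n h hn).1]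
      exact mul_le_of_le_one_left (abs_nonneg _) (hb n h hn).2.1
  have hlim2 := hlim.const_mul (1 / (2 * Real.pi))
  rw [mul_zero] at hlim2
  refine tendsto_of_tendsto_of_tendsto_of_le_of_le' tendsto_const_nhds hlim2
    (Eventually.of_forall fun n => Real.iSup_nonneg fun _ => norm_nonneg _) ?_
  filter_upwards [eventually_ge_atTop 1] with n hn
  have hn' : (n : ℂ) ≠ 0 := by
    have : n ≠ 0 := by omega
    exact_mod_cast this
  have hpi : (Real.pi : ℂ) ≠ 0 := by exact_mod_cast Real.pi_ne_zero
  refine ciSup_le fun lam => ?_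
  set g : ℤ → ℂ := fun h => (γ h : ℂ) * Complex.exp (-Complex.I * (h : ℂ) * (lam : ℂ)) with hgdef
  have hgn : ∀ h, ‖g h‖ = |γ h| := by
    intro h
    have : -Complex.I * (h : ℂ) * (lam : ℂ) = ((-(h * lam) : ℝ) : ℂ) * Complex.I := by
      push_cast; ring
    simp only [hgdef]
    rw [norm_mul, this, Complex.norm_exp_ofReal_mul_I, mul_one, Complex.norm_real,
      Real.norm_eq_abs]
  have hg : Summable g := by
    apply Summable.of_norm
    simpa only [hgn] using hsum
  have hdn : ∀ h, ‖(1 - (cnt n h : ℂ) / n) * g h‖ = (1 - (cnt n h : ℝ) / n) * |γ h| := by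
    intro h
    have : (1 - (cnt n h : ℂ) / n) = ((1 - (cnt n h : ℝ) / n : ℝ) : ℂ) := by push_cast; rfl
    rw [norm_mul, hgn, this, Complex.norm_real, Real.norm_eq_abs, abs_of_nonneg (hb n h hn).1]
  have hds : Summable fun h => (1 - (cnt n h : ℝ) / n) * |γ h| :=
    Summable.of_nonneg_of_le (fun h => mul_nonneg (hb n h hn).1 (abs_nonneg _))
      (fun h => mul_le_of_le_one_left (abs_nonneg _) (hb n h hn).2.1) hsum
  have hdc : Summable fun h => (1 - (cnt n h : ℂ) / n) * g h := by
    apply Summable.of_norm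
    simpa only [hdn] using hds
  have hS := sum_eq g hg n
  have hcs : ∑' h : ℤ, (cnt n h : ℂ) * g h
      = n * (∑' h, g h - ∑' h, (1 - (cnt n h : ℂ) / n) * g h) := by
    rw [← hg.tsum_sub hdc, ← tsum_mul_left]
    congr 1
    ext h
    field_simp
    ring
  have e : (1 / (2 * Real.pi * n) : ℂ) *
      (∑ s ∈ Finset.Icc (1 : ℤ) n, ∑ t ∈ Finset.Icc (1 : ℤ) n, g (s - t)) -
      (1 / (2 * Real.pi) : ℂ) * ∑' h, g h
      = -((1 / (2 * Real.pi) : ℝ) : ℂ) * ∑' h, (1 - (cnt n h : ℂ) / n) * g h := by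
    rw [hS, hcs]
    push_cast
    field_simp
    ring
  refine (congrArg norm e).le.trans ?_
  rw [norm_mul, norm_neg, Complex.norm_real, Real.norm_eq_abs, abs_of_nonneg (by positivity)]
  refine mul_le_mul_of_nonneg_left ?_ (by positivity)
  refine (norm_tsum_le_tsum_norm (by simpa only [hdn] using hds)).trans ?_
  simp only [hdn, le_refl]
end

section
/- Let n ≥ 1, let F be an n×n real orthogonal matrix, let C and D be n×n diagonal matrices with positive diagonal entries, let Σ be an n×n symmetric positive definite matrix, and set D_param := C^{−1}D. Let W = (W_1, …, W_n) be distributed according to the n-fold product of standard normal distributions, and set Z := F^T D^{1/2} W. Define B(z) := z^T F^T D^{−1} F z − z^T F^T C^{−1/2} F Σ^{−1} F^T C^{−1/2} F z. Then Var[B(Z)] = 2 tr((I_n − F Σ^{−1} F^T D_param)²). -/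
open MeasureTheory ProbabilityTheory Matrix

lemma aux_m4 : ∫ x, x ^ 4 ∂(gaussianReal 0 1) = 3 := by
  have h := iteratedDeriv_mgf_zero (X := fun x : ℝ => x) (μ := gaussianReal 0 1) (by simp) 4
  have e : ((fun x : ℝ => x) ^ 4) = fun x : ℝ => x ^ 4 := rfl
  rw [e] at h
  rw [← h, mgf_fun_id_gaussianReal]
  have key : ∀ (p p' : ℝ → ℝ), (∀ t, HasDerivAt p (p' t) t) →
      deriv (fun t => p t * Real.exp (0 * t + ((1 : NNReal) : ℝ) * t ^ 2 / 2)) =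
        fun t => (p' t + t * p t) * Real.exp (0 * t + ((1 : NNReal) : ℝ) * t ^ 2 / 2) := by
    intro p p' hp
    funext t
    have h1 : HasDerivAt (fun t : ℝ => 0 * t + ((1 : NNReal) : ℝ) * t ^ 2 / 2) t t := by
      have := ((hasDerivAt_pow 2 t).div_const 2)
      simpa using this
    have h2 := (hp t).mul h1.exp
    refine h2.deriv.trans ?_
    ring
  have d1 := key (fun _ => 1) (fun _ => 0) (fun t => hasDerivAt_const _ _)
  have d2 := key (fun t => t) (fun _ => 1) (fun t => hasDerivAt_id _)
  have d3 := key (fun t => 1 + t ^ 2) (fun t => 2 * t) (fun t => by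
    simpa using (hasDerivAt_pow 2 t).const_add 1)
  have d4 := key (fun t => 3 * t + t ^ 3) (fun t => 3 + 3 * t ^ 2) (fun t => by
    simpa using ((hasDerivAt_id t).const_mul 3).fun_add (hasDerivAt_pow 3 t))
  have e1 : ∀ t : ℝ, (0 + t * 1) = t := fun t => by ring
  have e2 : ∀ t : ℝ, (1 + t * t) = 1 + t ^ 2 := fun t => by ring
  have e3 : ∀ t : ℝ, (2 * t + t * (1 + t ^ 2)) = 3 * t + t ^ 3 := fun t => by ring
  simp only [e1, one_mul] at d1
  simp only [e2] at d2
  simp only [e3] at d3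
  simp only [NNReal.coe_one, one_mul] at d1 d2 d3 d4 ⊢
  rw [iteratedDeriv_succ', d1, iteratedDeriv_succ', d2, iteratedDeriv_succ', d3,
    iteratedDeriv_one, d4]
  simp

lemma aux_m2 : ∫ x, x ^ 2 ∂(gaussianReal 0 1) = 1 := by
  have h := variance_fun_id_gaussianReal (μ := 0) (v := 1)
  rw [variance_eq_integral (by fun_prop)] at h
  simpa using h

lemma aux_memLp : MemLp (fun x : ℝ => x ^ 2) 2 (gaussianReal 0 1) := by
  have h := memLp_id_gaussianReal' (μ := 0) (v := 1) 4 (by simp)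
  rw [memLp_two_iff_integrable_sq (by fun_prop)]
  have := h.integrable_norm_pow (p := 4) (by norm_num)
  refine this.congr (ae_of_all _ fun x => ?_)
  simp only [id, Real.norm_eq_abs]
  rw [Even.pow_abs (by decide)]
  ring

lemma aux_var (l : ℝ) : Var[fun x : ℝ => l * x ^ 2; gaussianReal 0 1] = 2 * l ^ 2 := by
  rw [variance_const_mul, variance_eq_sub aux_memLp]
  have : ((fun x : ℝ => x ^ 2) ^ 2) = fun x : ℝ => x ^ 4 := by
    funext x; simp [Pi.pow_apply]; ring
  rw [this, aux_m4, aux_m2]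
  ring

lemma aux_diag {n : ℕ} (l : Fin n → ℝ) :
    (∫ w, (∑ i, l i * w i ^ 2) ^ 2 ∂(Measure.pi fun _ : Fin n => gaussianReal 0 1)) -
      (∫ w, (∑ i, l i * w i ^ 2) ∂(Measure.pi fun _ : Fin n => gaussianReal 0 1)) ^ 2 =
    2 * ∑ i, l i ^ 2 := by
  have hm : ∀ i, MemLp (fun x : ℝ => l i * x ^ 2) 2 (gaussianReal 0 1) :=
    fun i => aux_memLp.const_mul (l i)
  have h := variance_sum_pi (μ := fun _ : Fin n => gaussianReal 0 1)
    (X := fun i x => l i * x ^ 2) hm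
  have hsum : MemLp (∑ i, fun w : Fin n → ℝ => l i * w i ^ 2) 2
      (Measure.pi fun _ : Fin n => gaussianReal 0 1) :=
    memLp_finsetSum' _ fun i _ => (hm i).comp_measurePreserving
      (measurePreserving_eval (fun _ : Fin n => gaussianReal 0 1) i)
  rw [variance_eq_sub hsum] at h
  simp only [aux_var, Pi.pow_apply, Finset.sum_apply] at h
  rw [h, Finset.mul_sum]

lemma aux_rot {n : ℕ} (b : OrthonormalBasis (Fin n) ℝ (EuclideanSpace ℝ (Fin n)))
    (f : (Fin n → ℝ) → ℝ) (hf : Continuous f) :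
    ∫ w, f w ∂(Measure.pi fun _ : Fin n => gaussianReal 0 1) =
    ∫ w, f (∑ i, w i • (b i).ofLp) ∂(Measure.pi fun _ : Fin n => gaussianReal 0 1) := by
  have h := (map_pi_eq_stdGaussian (ι := Fin n)).trans (stdGaussian_eq_map_pi_orthonormalBasis b)
  have h2 := congrArg (fun m => ∫ v, f (WithLp.ofLp v) ∂m) h
  simp only at h2
  have hc : Continuous fun v : EuclideanSpace ℝ (Fin n) => f v.ofLp := by fun_prop
  rw [integral_map (Measurable.aemeasurable (by fun_prop)) hc.aestronglyMeasurable,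
    integral_map (Measurable.aemeasurable (by fun_prop)) hc.aestronglyMeasurable] at h2
  simpa using h2

lemma aux_trace {n : ℕ} (A : Matrix (Fin n) (Fin n) ℝ) (hA : A.IsHermitian) :
    trace (A ^ 2) = ∑ i, hA.eigenvalues i ^ 2 := by
  conv_lhs => rw [hA.spectral_theorem, ← map_pow, Unitary.conjStarAlgAut_apply, trace_mul_cycle]
  simp [diagonal_pow, trace_diagonal]

lemma aux_quad {n : ℕ} (A : Matrix (Fin n) (Fin n) ℝ) (hA : A.IsHermitian) (w : Fin n → ℝ) :
    (∑ i, w i • (hA.eigenvectorBasis i).ofLp) ⬝ᵥ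
      A *ᵥ (∑ i, w i • (hA.eigenvectorBasis i).ofLp) = ∑ i, hA.eigenvalues i * w i ^ 2 := by
  have ho : ∀ i j, (hA.eigenvectorBasis i).ofLp ⬝ᵥ (hA.eigenvectorBasis j).ofLp =
      if i = j then 1 else 0 := by
    intro i j
    have := orthonormal_iff_ite.1 hA.eigenvectorBasis.orthonormal j i
    rw [EuclideanSpace.inner_eq_star_dotProduct] at this
    simpa [eq_comm] using this
  simp only [mulVec_sum, mulVec_smul, hA.mulVec_eigenvectorBasis, sum_dotProduct, dotProduct_sum,
    smul_dotProduct, dotProduct_smul, ho, smul_eq_mul]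
  simp
  refine Finset.sum_congr rfl fun i _ => ?_
  ring

lemma aux_main {n : ℕ} (A : Matrix (Fin n) (Fin n) ℝ) (hA : A.IsHermitian) :
    (∫ w, (w ⬝ᵥ A *ᵥ w) ^ 2 ∂(Measure.pi fun _ : Fin n => gaussianReal 0 1)) -
      (∫ w, (w ⬝ᵥ A *ᵥ w) ∂(Measure.pi fun _ : Fin n => gaussianReal 0 1)) ^ 2 =
    2 * trace (A ^ 2) := by
  have hc : Continuous fun w : Fin n → ℝ => w ⬝ᵥ A *ᵥ w := by fun_prop
  rw [aux_rot hA.eigenvectorBasis _ hc, aux_rot hA.eigenvectorBasis (fun w => (w ⬝ᵥ A *ᵥ w) ^ 2) (by fun_prop)]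
  simp only [aux_quad]
  rw [aux_diag, aux_trace A hA]

set_option maxHeartbeats 2000000 in
/-- variance of the log-likelihood-ratio quadratic form `B(Z)` under the
Whittle (Gaussian) approximation `Z = Fᵀ D^{1/2} W` with `W` i.i.d. standard normal. -/
theorem statement13 (n : ℕ) (hn : 1 ≤ n) (F : Matrix (Fin n) (Fin n) ℝ)
    (hF1 : F * Fᵀ = 1) (hF2 : Fᵀ * F = 1)
    (c d : Fin n → ℝ) (hc : ∀ i, 0 < c i) (hd : ∀ i, 0 < d i)
    (S : Matrix (Fin n) (Fin n) ℝ) (hS : S.PosDef) :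
    let C : Matrix (Fin n) (Fin n) ℝ := Matrix.diagonal c
    let D : Matrix (Fin n) (Fin n) ℝ := Matrix.diagonal d
    let Cmhalf : Matrix (Fin n) (Fin n) ℝ := Matrix.diagonal fun i => c i ^ (-(1 : ℝ) / 2)
    let Dhalf : Matrix (Fin n) (Fin n) ℝ := Matrix.diagonal fun i => Real.sqrt (d i)
    let B : (Fin n → ℝ) → ℝ := fun z =>
      z ⬝ᵥ (Fᵀ * D⁻¹ * F).mulVec z -
        z ⬝ᵥ (Fᵀ * Cmhalf * F * S⁻¹ * Fᵀ * Cmhalf * F).mulVec z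
    (∫ w, B ((Fᵀ * Dhalf).mulVec w) ^ 2
        ∂(Measure.pi fun _ : Fin n => gaussianReal 0 1)) -
      (∫ w, B ((Fᵀ * Dhalf).mulVec w)
          ∂(Measure.pi fun _ : Fin n => gaussianReal 0 1)) ^ 2 =
    2 * Matrix.trace ((1 - F * S⁻¹ * Fᵀ * (C⁻¹ * D)) ^ 2) := by
  intro C D Cmhalf Dhalf B
  set M := F * S⁻¹ * Fᵀ with hM
  set E : Matrix (Fin n) (Fin n) ℝ := Cmhalf * Dhalf with hE
  have hMs : Mᵀ = M := by
    have : (S⁻¹)ᵀ = S⁻¹ := by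
      have := hS.isHermitian.inv
      simpa [IsHermitian, conjTranspose_eq_transpose_of_trivial] using this
    simp [hM, transpose_mul, this, Matrix.mul_assoc]
  have hcomm : Dhalf * Cmhalf = E := by
    simp [hE, Dhalf, Cmhalf, diagonal_mul_diagonal, mul_comm]
  have hEt : Eᵀ = E := by simp [hE, Dhalf, Cmhalf, diagonal_mul_diagonal]
  have hCi : C⁻¹ = diagonal fun i => (c i)⁻¹ := by
    refine inv_eq_right_inv ?_
    simp only [C, diagonal_mul_diagonal]
    rw [← diagonal_one]; congr 1; funext i; exact mul_inv_cancel₀ (hc i).ne'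
  have hDi : D⁻¹ = diagonal fun i => (d i)⁻¹ := by
    refine inv_eq_right_inv ?_
    simp only [D, diagonal_mul_diagonal]
    rw [← diagonal_one]; congr 1; funext i; exact mul_inv_cancel₀ (hd i).ne'
  have hEE : E * E = C⁻¹ * D := by
    rw [hCi]
    simp only [hE, Cmhalf, Dhalf, D, diagonal_mul_diagonal]
    congr 1; funext i
    have h1 : c i ^ (-(1 : ℝ) / 2) * c i ^ (-(1 : ℝ) / 2) = (c i)⁻¹ := by
      rw [← Real.rpow_add (hc i), ← Real.rpow_neg_one]; norm_num
    have h2 := Real.mul_self_sqrt (hd i).le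
    calc _ = (c i ^ (-(1 : ℝ) / 2) * c i ^ (-(1 : ℝ) / 2)) * (√(d i) * √(d i)) := by ring
      _ = _ := by rw [h1, h2]
  have hDD : Dhalf * D⁻¹ * Dhalf = 1 := by
    rw [hDi]
    simp only [Dhalf, diagonal_mul_diagonal]
    rw [← diagonal_one]; congr 1; funext i
    have h2 := Real.mul_self_sqrt (hd i).le
    calc _ = (√(d i) * √(d i)) * (d i)⁻¹ := by ring
      _ = _ := by rw [h2]; exact mul_inv_cancel₀ (hd i).ne'
  have hDt : Dhalfᵀ = Dhalf := by simp [Dhalf]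
  have hFc : ∀ X : Matrix (Fin n) (Fin n) ℝ, F * (Fᵀ * X) = X := fun X => by
    rw [← Matrix.mul_assoc, hF1, Matrix.one_mul]
  have hq : ∀ (P X : Matrix (Fin n) (Fin n) ℝ) (w : Fin n → ℝ),
      (P *ᵥ w) ⬝ᵥ (X *ᵥ (P *ᵥ w)) = w ⬝ᵥ (Pᵀ * X * P) *ᵥ w := fun P X w => by
    rw [← mulVec_mulVec, ← mulVec_mulVec, dotProduct_mulVec w, vecMul_transpose]
  have hB : ∀ w, B ((Fᵀ * Dhalf) *ᵥ w) = w ⬝ᵥ (1 - E * M * E) *ᵥ w := fun w => by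
    simp only [B, hq]
    rw [← dotProduct_sub, ← sub_mulVec]
    have a1 : (Fᵀ * Dhalf)ᵀ * (Fᵀ * D⁻¹ * F) * (Fᵀ * Dhalf) = 1 := by
      rw [← hDD]
      simp only [transpose_mul, transpose_transpose, hDt, Matrix.mul_assoc, hFc]
    have a2 : (Fᵀ * Dhalf)ᵀ * (Fᵀ * Cmhalf * F * S⁻¹ * Fᵀ * Cmhalf * F) * (Fᵀ * Dhalf)
        = E * M * E := by
      calc _ = (Dhalf * Cmhalf) * M * (Cmhalf * Dhalf) := by
            simp only [transpose_mul, transpose_transpose, hDt, Matrix.mul_assoc, hFc, hM]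
        _ = _ := by rw [hcomm]
    rw [a1, a2]
  simp only [hB]
  have hH : (1 - E * M * E).IsHermitian := by
    rw [IsHermitian, conjTranspose_eq_transpose_of_trivial]
    simp [transpose_sub, transpose_mul, hEt, hMs, Matrix.mul_assoc]
  rw [aux_main _ hH, ← hEE]
  congr 1
  have t1 : trace (E * M * E) = trace (M * (E * E)) := by
    rw [Matrix.mul_assoc, trace_mul_comm, Matrix.mul_assoc]
  have t2 : trace (E * M * E * (E * M * E)) = trace (M * (E * E) * (M * (E * E))) := by
    have : E * M * E * (E * M * E) = E * (M * E * (E * M * E)) := by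
      simp only [Matrix.mul_assoc]
    rw [this, trace_mul_comm]; simp only [Matrix.mul_assoc]
  have ex : ∀ X : Matrix (Fin n) (Fin n) ℝ,
      trace ((1 - X) ^ 2) = trace (1 : Matrix (Fin n) (Fin n) ℝ) - 2 * trace X + trace (X * X) :=
    fun X => by
      have : (1 - X) ^ 2 = 1 - X - X + X * X := by noncomm_ring
      rw [this, trace_add, trace_sub, trace_sub]; ring
  rw [ex, ex, t1, t2]
end

section
/- Let μ_n denote the n-fold product of the standard normal distribution on ℝ^n. Then for every y > 1 and every n ≥ 1, μ_n({w ∈ ℝ^n : Σ_{i=1}^n w_i² ≥ n·y}) ≤ exp(−n·β₂) where β₂ := (y − 1 − log y)/2, and moreover β₂ > 0. -/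
open MeasureTheory ProbabilityTheory

lemma aux_one (y : ℝ) (hy : 1 < y) :
    ∫ x, Real.exp ((1 - 1 / y) / 2 * x ^ 2) ∂(gaussianReal 0 1) = Real.sqrt y := by
  have hy0 : 0 < y := by linarith
  rw [integral_gaussianReal_eq_integral_smul one_ne_zero]
  have h : ∀ x : ℝ, gaussianPDFReal 0 1 x • Real.exp ((1 - 1 / y) / 2 * x ^ 2)
      = (Real.sqrt (2 * Real.pi))⁻¹ * Real.exp (-(1 / (2 * y)) * x ^ 2) := by
    intro x
    rw [gaussianPDFReal, smul_eq_mul, mul_assoc, ← Real.exp_add]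
    simp only [NNReal.coe_one, mul_one, sub_zero]
    congr 2
    field_simp
    ring
  simp_rw [h]
  rw [integral_const_mul, integral_gaussian]
  have h2 : Real.pi / (1 / (2 * y)) = 2 * Real.pi * y := by field_simp
  have h3 : 0 < Real.sqrt (2 * Real.pi) := Real.sqrt_pos.2 (by positivity)
  rw [h2, Real.sqrt_mul (by positivity) y]
  field_simp

/-- Chernoff-type upper-tail bound for the chi-squared distribution:
if `W` consists of `n` i.i.d. standard normals and `y > 1`, then
`P(∑ Wᵢ² ≥ n y) ≤ exp(-n β₂)` with `β₂ = (y - 1 - log y)/2 > 0`. -/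
theorem statement15 (y : ℝ) (hy : 1 < y) (n : ℕ) (hn : 1 ≤ n) :
    (Measure.pi fun _ : Fin n => gaussianReal 0 1)
        {w : Fin n → ℝ | (n : ℝ) * y ≤ ∑ i, w i ^ 2} ≤
      ENNReal.ofReal (Real.exp (-(n * ((y - 1 - Real.log y) / 2)))) ∧
    0 < (y - 1 - Real.log y) / 2 := by
  have hy0 : 0 < y := by linarith
  refine ⟨?_, by linarith [Real.log_lt_sub_one_of_pos hy0 hy.ne']⟩
  have hI : ∫ w : Fin n → ℝ, Real.exp ((1 - 1 / y) / 2 * ∑ i, w i ^ 2)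
      ∂(Measure.pi fun _ : Fin n => gaussianReal 0 1) = Real.sqrt y ^ n := by
    simp_rw [Finset.mul_sum, Real.exp_sum]
    rw [integral_fintype_prod_eq_pow (fun x : ℝ => Real.exp ((1 - 1 / y) / 2 * x ^ 2)),
      aux_one y hy, Fintype.card_fin]
  have hz : 0 ≤ (1 - 1 / y) / 2 := by
    have : 1 / y ≤ 1 := by rw [div_le_one hy0]; exact hy.le
    linarith
  have hint : Integrable (fun w : Fin n → ℝ => Real.exp ((1 - 1 / y) / 2 * ∑ i, w i ^ 2))
      (Measure.pi fun _ : Fin n => gaussianReal 0 1) := by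
    apply Integrable.of_integral_ne_zero
    rw [hI]
    exact pow_ne_zero _ (Real.sqrt_pos.2 hy0).ne'
  have hm := measure_ge_le_exp_mul_mgf (X := fun w : Fin n → ℝ => ∑ i, w i ^ 2)
    ((n : ℝ) * y) hz hint
  rw [mgf, hI] at hm
  rw [← ofReal_measureReal]
  apply ENNReal.ofReal_le_ofReal
  refine hm.trans (le_of_eq ?_)
  have hs : Real.sqrt y = Real.exp (Real.log y / 2) := by
    rw [Real.exp_half, Real.exp_log hy0]
  rw [hs, ← Real.exp_nat_mul, ← Real.exp_add]
  congr 1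
  field_simp
  ring
end
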